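/- Global Laplacian error estimate for PUM approximation: under the boundary condition ∇_L φ⁽ʲ⁾(e) = 0 on all edges leaving V_j, and local bounds ‖x − x_*⁽ʲ⁾‖_{ℒᵖ(G_j)} ≤ E_{j,0}, ‖∇_{L⁽ʲ⁾}(x − x_*⁽ʲ⁾)‖_{ℒᵖ(E_j)} ≤ E_{j,1}, ‖L⁽ʲ⁾(x − x_*⁽ʲ⁾)‖_{ℒᵖ(G_j)} ≤ E_{j,2}, the global approximant x_* = ∑_j φ⁽ʲ⁾ x_*⁽ʲ⁾ satisfies ‖Lx − Lx_*‖_{ℒᵖ(G)} ≤ ∑_{j=1}^J ( E_{j,2} + ‖∇_L φ⁽ʲ⁾‖_{ℒ^{∞,q}(E)} E_{j,1} + ‖L_S φ⁽ʲ⁾‖_{ℒ^∞(G)} E_{j,0} ), where 1/p + 1/q = 1. -/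

import Mathlib

open Matrix
open scoped ENNReal

/-- `ℒᵖ` norm of a signal restricted to a vertex subset `S` (`max` for `p = ∞`). -/
noncomputable def lpSub {n : ℕ} (p : ℝ≥0∞) (S : Finset (Fin n)) (x : Fin n → ℝ) : ℝ :=
  if p = ∞ then ⨆ v : S, |x v| else (∑ v ∈ S, |x v| ^ p.toReal) ^ (1 / p.toReal)

/-- `ℒᵖ` norm of a function on a (directed) edge set `E`. -/
noncomputable def lpEdge {n : ℕ} (p : ℝ≥0∞) (E : Finset (Fin n × Fin n))
    (z : Fin n × Fin n → ℝ) : ℝ :=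
  if p = ∞ then ⨆ e : E, |z e| else (∑ e ∈ E, |z e| ^ p.toReal) ^ (1 / p.toReal)

/-- Hybrid norm `‖z‖_{ℒ^{∞,q}(E)} = max_i (∑_{i' : (i,i') ∈ E} |z(i,i')|^q)^{1/q}`. -/
noncomputable def lpHybrid {n : ℕ} (q : ℝ≥0∞) (E : Finset (Fin n × Fin n))
    (z : Fin n × Fin n → ℝ) : ℝ :=
  ⨆ i : Fin n, lpEdge q (E.filter fun e => e.1 = i) z

noncomputable def gn {ι : Type*} (p : ℝ≥0∞) (S : Finset ι) (f : ι → ℝ) : ℝ :=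
  if p = ∞ then ⨆ v : S, |f v| else (∑ v ∈ S, |f v| ^ p.toReal) ^ (1 / p.toReal)

theorem gn_nonneg {ι : Type*} (p : ℝ≥0∞) (S : Finset ι) (f : ι → ℝ) : 0 ≤ gn p S f := by
  unfold gn
  split_ifs
  · exact Real.iSup_nonneg fun _ => abs_nonneg _
  · exact Real.rpow_nonneg (Finset.sum_nonneg fun _ _ => Real.rpow_nonneg (abs_nonneg _) _) _

theorem le_gn_top {ι : Type*} (S : Finset ι) (f : ι → ℝ) {v : ι} (hv : v ∈ S) :
    |f v| ≤ gn ∞ S f := by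
  unfold gn
  rw [if_pos rfl]
  exact le_ciSup (f := fun v : S => |f v|) (Set.finite_range _).bddAbove ⟨v, hv⟩

theorem gn_top_le {ι : Type*} (S : Finset ι) (f : ι → ℝ) {C : ℝ} (hC : 0 ≤ C)
    (h : ∀ v ∈ S, |f v| ≤ C) : gn ∞ S f ≤ C := by
  unfold gn
  rw [if_pos rfl]
  exact Real.iSup_le (fun v => h v v.2) hC

theorem gn_fin {ι : Type*} {p : ℝ≥0∞} (hp : p ≠ ∞) (S : Finset ι) (f : ι → ℝ) :
    gn p S f = (∑ v ∈ S, |f v| ^ p.toReal) ^ (1 / p.toReal) := by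
  unfold gn
  rw [if_neg hp]

theorem one_le_toReal {p : ℝ≥0∞} (h1 : 1 ≤ p) (hp : p ≠ ∞) : 1 ≤ p.toReal := by
  simpa using (ENNReal.toReal_le_toReal ENNReal.one_ne_top hp).2 h1

theorem gn_mono {ι : Type*} {p : ℝ≥0∞} (h1 : 1 ≤ p) (S : Finset ι) {f g : ι → ℝ}
    (h : ∀ v ∈ S, |f v| ≤ |g v|) : gn p S f ≤ gn p S g := by
  by_cases hp : p = ∞
  · subst hp
    exact gn_top_le _ _ (gn_nonneg _ _ _) fun v hv => (h v hv).trans (le_gn_top S g hv)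
  · have := one_le_toReal h1 hp
    rw [gn_fin hp, gn_fin hp]
    apply Real.rpow_le_rpow
    · exact Finset.sum_nonneg fun _ _ => Real.rpow_nonneg (abs_nonneg _) _
    · exact Finset.sum_le_sum fun v hv =>
        Real.rpow_le_rpow (abs_nonneg _) (h v hv) (by linarith)
    · positivity

theorem gn_add {ι : Type*} {p : ℝ≥0∞} (h1 : 1 ≤ p) (S : Finset ι) (f g : ι → ℝ) :
    gn p S (fun v => f v + g v) ≤ gn p S f + gn p S g := by
  by_cases hp : p = ∞
  · subst hp
    exact gn_top_le _ _ (add_nonneg (gn_nonneg _ _ _) (gn_nonneg _ _ _)) fun v hv =>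
      (abs_add_le _ _).trans (add_le_add (le_gn_top S f hv) (le_gn_top S g hv))
  · rw [gn_fin hp, gn_fin hp, gn_fin hp]
    exact Real.Lp_add_le S f g (one_le_toReal h1 hp)

theorem gn_smul {ι : Type*} {p : ℝ≥0∞} (h1 : 1 ≤ p) (S : Finset ι) (f : ι → ℝ) {c : ℝ}
    (hc : 0 ≤ c) : gn p S (fun v => c * f v) ≤ c * gn p S f := by
  by_cases hp : p = ∞
  · subst hp
    refine gn_top_le _ _ (mul_nonneg hc (gn_nonneg _ _ _)) fun v hv => ?_
    rw [abs_mul, abs_of_nonneg hc]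
    exact mul_le_mul_of_nonneg_left (le_gn_top S f hv) hc
  · have := one_le_toReal h1 hp
    rw [gn_fin hp, gn_fin hp]
    simp_rw [abs_mul, abs_of_nonneg hc, Real.mul_rpow hc (abs_nonneg _)]
    rw [← Finset.mul_sum, Real.mul_rpow (by positivity)
      (Finset.sum_nonneg fun _ _ => Real.rpow_nonneg (abs_nonneg _) _), ← Real.rpow_mul hc,
      mul_one_div_cancel (by linarith), Real.rpow_one]

theorem gn_zero {ι : Type*} {p : ℝ≥0∞} (h1 : 1 ≤ p) (S : Finset ι) :
    gn p S (fun _ => 0) ≤ 0 := by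
  simpa using gn_smul h1 S (fun _ => 0) le_rfl

theorem gn_sum {ι κ : Type*} {p : ℝ≥0∞} (h1 : 1 ≤ p) (S : Finset ι) (T : Finset κ)
    (f : κ → ι → ℝ) : gn p S (fun v => ∑ j ∈ T, f j v) ≤ ∑ j ∈ T, gn p S (f j) := by
  classical
  induction T using Finset.induction_on with
  | empty => simpa using gn_zero h1 S
  | insert a T ha ih =>
    simp_rw [Finset.sum_insert ha]
    exact (gn_add h1 S _ _).trans (by gcongr)

theorem gn_ext {ι : Type*} [Fintype ι] [DecidableEq ι] {p : ℝ≥0∞} (h1 : 1 ≤ p) (S : Finset ι)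
    (f : ι → ℝ) : gn p Finset.univ (fun v => if v ∈ S then f v else 0) ≤ gn p S f := by
  by_cases hp : p = ∞
  · subst hp
    refine gn_top_le _ _ (gn_nonneg _ _ _) fun v _ => ?_
    split_ifs with hv
    · exact le_gn_top S f hv
    · simpa using gn_nonneg _ _ _
  · have := one_le_toReal h1 hp
    rw [gn_fin hp, gn_fin hp]
    apply le_of_eq
    congr 1
    rw [← Finset.sum_subset (Finset.subset_univ S)]
    · exact Finset.sum_congr rfl fun v hv => by rw [if_pos hv]
    · intro v _ hv
      rw [if_neg hv, abs_zero, Real.zero_rpow (by linarith)]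

theorem sum_mul_le_top {ι : Type*} (S : Finset ι) (f g : ι → ℝ) :
    ∑ v ∈ S, |f v| * |g v| ≤ gn 1 S f * gn ∞ S g := by
  rw [gn_fin ENNReal.one_ne_top]
  simp only [ENNReal.toReal_one, Real.rpow_one, div_one]
  rw [Finset.sum_mul]
  exact Finset.sum_le_sum fun v hv =>
    mul_le_mul_of_nonneg_left (le_gn_top S g hv) (abs_nonneg _)

theorem gn_holder {ι : Type*} {p q : ℝ≥0∞} (hp : 1 ≤ p) (hpq : p⁻¹ + q⁻¹ = 1) (S : Finset ι)
    (f g : ι → ℝ) : ∑ v ∈ S, |f v| * |g v| ≤ gn q S f * gn p S g := by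
  by_cases h : p = ∞
  · subst h
    have : q = 1 := by simpa using hpq
    subst this
    exact sum_mul_le_top S f g
  by_cases h' : q = ∞
  · subst h'
    have : p = 1 := by simpa using hpq
    subst this
    have := sum_mul_le_top S g f
    rw [mul_comm]
    simpa only [mul_comm] using this
  · have hp1 := one_le_toReal hp h
    have hq : q ≠ 0 := by
      rintro rfl
      simp at hpq
    have hp0 : p ≠ 0 := by
      rintro rfl
      simp at hp
    have hq0 : 0 < q.toReal := ENNReal.toReal_pos hq h'
    have hs : p.toReal⁻¹ + q.toReal⁻¹ = 1 := by
      rw [← ENNReal.toReal_inv, ← ENNReal.toReal_inv, ← ENNReal.toReal_add (by simpa) (by simpa),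
        hpq, ENNReal.toReal_one]
    have hc : q.toReal.HolderConjugate p.toReal :=
      ⟨by simpa [add_comm] using hs, hq0, by linarith⟩
    rw [gn_fin h, gn_fin h']
    simpa using Real.inner_le_Lp_mul_Lq S (fun v => |f v|) (fun v => |g v|) hc

theorem gn_iter {n : ℕ} {p : ℝ≥0∞} (h1 : 1 ≤ p) (E : Finset (Fin n × Fin n))
    (z : Fin n × Fin n → ℝ) :
    gn p Finset.univ (fun v => gn p (E.filter fun e => e.1 = v) z) ≤ gn p E z := by
  by_cases hp : p = ∞
  · subst hp
    refine gn_top_le _ _ (gn_nonneg _ _ _) fun v _ => ?_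
    rw [abs_of_nonneg (gn_nonneg _ _ _)]
    exact gn_top_le _ _ (gn_nonneg _ _ _) fun e he => le_gn_top E z (Finset.mem_filter.1 he).1
  · have := one_le_toReal h1 hp
    simp_rw [gn_fin hp]
    apply le_of_eq
    congr 1
    rw [← Finset.sum_fiberwise E (fun e => e.1)]
    refine Finset.sum_congr rfl fun v _ => ?_
    have h0 : 0 ≤ ∑ e ∈ E.filter (fun e => e.1 = v), |z e| ^ p.toReal :=
      Finset.sum_nonneg fun _ _ => Real.rpow_nonneg (abs_nonneg _) _
    rw [abs_of_nonneg (Real.rpow_nonneg h0 _), ← Real.rpow_mul h0,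
      one_div_mul_cancel (by linarith), Real.rpow_one]

theorem gn_subset {ι : Type*} {p : ℝ≥0∞} (h1 : 1 ≤ p) {S T : Finset ι} (hST : S ⊆ T)
    (f : ι → ℝ) : gn p S f ≤ gn p T f := by
  by_cases hp : p = ∞
  · subst hp
    exact gn_top_le _ _ (gn_nonneg _ _ _) fun v hv => le_gn_top T f (hST hv)
  · have := one_le_toReal h1 hp
    rw [gn_fin hp, gn_fin hp]
    apply Real.rpow_le_rpow
    · exact Finset.sum_nonneg fun _ _ => Real.rpow_nonneg (abs_nonneg _) _
    · exact Finset.sum_le_sum_of_subset_of_nonneg hST fun _ _ _ =>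
        Real.rpow_nonneg (abs_nonneg _) _
    · positivity

/-- Global Laplacian error estimate for PUM approximation: under the boundary condition
`∇_L φ j (e) = 0` on all edges leaving `V_j` and the local bounds
`‖x - x_*⁽ʲ⁾‖_{ℒᵖ(G_j)} ≤ E0 j`, `‖∇_{L⁽ʲ⁾}(x - x_*⁽ʲ⁾)‖_{ℒᵖ(E_j)} ≤ E1 j`,
`‖L⁽ʲ⁾(x - x_*⁽ʲ⁾)‖_{ℒᵖ(G_j)} ≤ E2 j`, the global approximant `x_* = ∑_j φ j x_*⁽ʲ⁾`
satisfies `‖Lx - Lx_*‖_{ℒᵖ(G)} ≤ ∑_j (E2 j + ‖∇_L φ j‖_{ℒ^{∞,q}(E)} E1 j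
+ ‖L_S φ j‖_{ℒ^∞(G)} E0 j)`, where `1/p + 1/q = 1`. -/
theorem pum_global_laplacian_error
    {n : ℕ} {J : ℕ} (L : Matrix (Fin n) (Fin n) ℝ) (hsymm : L.IsSymm)
    (hoff : ∀ i j, i ≠ j → L i j ≤ 0)
    (p q : ℝ≥0∞) (hp : 1 ≤ p) (hpq : p⁻¹ + q⁻¹ = 1)
    (Vj : Fin J → Finset (Fin n)) (hcover : ∀ v, ∃ j, v ∈ Vj j)
    (φ : Fin J → Fin n → ℝ)
    (hφnonneg : ∀ j v, 0 ≤ φ j v)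
    (hφsupp : ∀ j v, φ j v ≠ 0 → v ∈ Vj j)
    (hφsum : ∀ v, ∑ j, φ j v = 1)
    (x : Fin n → ℝ) (xloc : Fin J → Fin n → ℝ) (E0 E1 E2 : Fin J → ℝ) :
    let A : Matrix (Fin n) (Fin n) ℝ := Matrix.of fun a b => if a ≠ b then -L a b else 0
    let LS : Matrix (Fin n) (Fin n) ℝ := Matrix.diagonal (fun a => ∑ b, A a b) - A
    let E : Finset (Fin n × Fin n) := Finset.univ.filter fun e => A e.1 e.2 ≠ 0
    let Ej : Fin J → Finset (Fin n × Fin n) :=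
      fun j => E.filter fun e => e.1 ∈ Vj j ∧ e.2 ∈ Vj j
    let grad : (Fin n → ℝ) → Fin n × Fin n → ℝ :=
      fun z e => Real.sqrt (A e.1 e.2) * (z e.1 - z e.2)
    -- local Laplacian `L⁽ʲ⁾`: principal submatrix of `L` on `V_j`, acting on signals
    let locLap : Fin J → (Fin n → ℝ) → Fin n → ℝ :=
      fun j z v => ∑ w ∈ Vj j, L v w * z w
    -- boundary condition for the partition of unity
    (∀ j, ∀ e ∈ E, e.1 ∈ Vj j → e.2 ∉ Vj j → grad (φ j) e = 0) →
    -- local error bounds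
    (∀ j, lpSub p (Vj j) (fun v => x v - xloc j v) ≤ E0 j) →
    (∀ j, lpEdge p (Ej j) (grad fun v => x v - xloc j v) ≤ E1 j) →
    (∀ j, lpSub p (Vj j) (locLap j fun v => x v - xloc j v) ≤ E2 j) →
    lpSub p Finset.univ
        (fun v => L.mulVec x v - L.mulVec (fun u => ∑ j, φ j u * xloc j u) v) ≤
      ∑ j, (E2 j + lpHybrid q E (grad (φ j)) * E1 j +
        lpSub ∞ Finset.univ (LS.mulVec (φ j)) * E0 j) := by
  intro A LS E Ej grad locLap hbd h0 h1 h2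
  have hsub : ∀ (r : ℝ≥0∞) (S : Finset (Fin n)) (f : Fin n → ℝ), lpSub r S f = gn r S f :=
    fun _ _ _ => rfl
  have hedge : ∀ (r : ℝ≥0∞) (S : Finset (Fin n × Fin n)) (f : Fin n × Fin n → ℝ),
    lpEdge r S f = gn r S f := fun _ _ _ => rfl
  simp only [hsub, hedge] at h0 h1 h2 ⊢
  set d : Fin J → Fin n → ℝ := fun j v => x v - xloc j v with hd
  set H : Fin J → ℝ := fun j => lpHybrid q E (grad (φ j)) with hH
  set M : Fin J → ℝ := fun j => gn ∞ Finset.univ (LS.mulVec (φ j)) with hM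
  have hH0 : ∀ j, 0 ≤ H j := fun j => Real.iSup_nonneg fun _ => gn_nonneg _ _ _
  have hM0 : ∀ j, 0 ≤ M j := fun j => gn_nonneg _ _ _
  have hHle : ∀ j v, gn q (E.filter fun e => e.1 = v) (grad (φ j)) ≤ H j := fun j v =>
    le_ciSup (f := fun i : Fin n => lpEdge q (E.filter fun e => e.1 = i) (grad (φ j)))
      (Set.finite_range _).bddAbove v
  have hA0 : ∀ a b, 0 ≤ A a b := by
    intro a b
    simp only [A, Matrix.of_apply]
    split_ifs with h
    · linarith [hoff a b h]
    · exact le_rfl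
  have hAs : ∀ a b, A a b = A b a := by
    intro a b
    simp only [A, Matrix.of_apply, ne_comm (a := a), hsymm.apply a b]
  have hφ1 : ∀ j v, φ j v ≤ 1 := fun j v => by
    rw [← hφsum v]
    exact Finset.single_le_sum (f := fun j => φ j v) (fun i _ => hφnonneg i v) (Finset.mem_univ j)
  have hφ0 : ∀ j v, v ∉ Vj j → φ j v = 0 := fun j v hv => by
    by_contra h
    exact hv (hφsupp j v h)
  have hbd' : ∀ j a b, a ∈ Vj j → b ∉ Vj j → A a b * (φ j a - φ j b) = 0 := by
    intro j a b ha hb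
    by_cases hz : A a b = 0
    · rw [hz, zero_mul]
    · have := hbd j (a, b) (by simp [E, hz]) ha hb
      simp only [grad, mul_eq_zero] at this
      rcases this with h | h
      · exact absurd ((Real.sqrt_eq_zero (hA0 a b)).1 h) hz
      · rw [h, mul_zero]
  have hq1 : 1 ≤ q := by
    rw [← ENNReal.inv_le_one, ← hpq]
    exact le_add_self
  have hLdiff : ∀ j v w, L v w * (φ j w - φ j v) = A v w * (φ j v - φ j w) := by
    intro j v w
    by_cases h : v = w
    · subst h; simp
    · simp only [A, Matrix.of_apply, ne_eq, h, not_false_eq_true, if_true]; ring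
  have hLS : ∀ j v, LS.mulVec (φ j) v = ∑ w, A v w * (φ j v - φ j w) := by
    intro j v
    simp only [LS]
    rw [Matrix.sub_mulVec, Pi.sub_apply, Matrix.mulVec_diagonal]
    simp only [Matrix.mulVec, dotProduct, Finset.sum_mul, mul_sub, Finset.sum_sub_distrib]
  have herr : ∀ v, L.mulVec x v - L.mulVec (fun u => ∑ j, φ j u * xloc j u) v =
      ∑ j, ∑ w ∈ Vj j, L v w * (φ j w * d j w) := by
    intro v
    have e1 : ∀ j, ∑ w ∈ Vj j, L v w * (φ j w * d j w) = ∑ w, L v w * (φ j w * d j w) := by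
      intro j
      apply Finset.sum_subset (Finset.subset_univ _)
      intro w _ hw
      rw [hφ0 j w hw]; ring
    simp_rw [e1]
    rw [Finset.sum_comm]
    simp only [Matrix.mulVec, dotProduct]
    rw [← Finset.sum_sub_distrib]
    refine Finset.sum_congr rfl fun w _ => ?_
    rw [← Finset.mul_sum, ← mul_sub]
    congr 1
    simp only [hd, mul_sub, Finset.sum_sub_distrib]
    rw [← Finset.sum_mul, hφsum w, one_mul]
  -- pointwise bound
  set a : Fin J → Fin n → ℝ := fun j v => if v ∈ Vj j then |locLap j (d j) v| else 0 with ha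
  set b : Fin J → Fin n → ℝ :=
    fun j v => gn p ((Ej j).filter fun e => e.1 = v) (grad (d j)) with hb
  set c : Fin J → Fin n → ℝ := fun j v => if v ∈ Vj j then |d j v| else 0 with hc
  have hb0 : ∀ j v, 0 ≤ b j v := fun j v => gn_nonneg _ _ _
  have hpt : ∀ j v, |∑ w ∈ Vj j, L v w * (φ j w * d j w)| ≤ a j v + H j * b j v + M j * c j v := by
    intro j v
    have e1 : ∑ w ∈ Vj j, L v w * (φ j w * d j w) =
        φ j v * locLap j (d j) v + ∑ w ∈ Vj j, A v w * (φ j v - φ j w) * d j w := by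
      simp only [locLap]
      rw [Finset.mul_sum, ← Finset.sum_add_distrib]
      refine Finset.sum_congr rfl fun w _ => ?_
      rw [← hLdiff]; ring
    by_cases hv : v ∈ Vj j
    · have e2 : ∑ w ∈ Vj j, A v w * (φ j v - φ j w) * d j w =
          d j v * LS.mulVec (φ j) v -
            ∑ w ∈ Vj j, grad (φ j) (v, w) * grad (d j) (v, w) := by
        have e3 : LS.mulVec (φ j) v = ∑ w ∈ Vj j, A v w * (φ j v - φ j w) := by
          rw [hLS]
          symm
          apply Finset.sum_subset (Finset.subset_univ _)
          intro w _ hw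
          exact hbd' j v w hv hw
        rw [e3, Finset.mul_sum, ← Finset.sum_sub_distrib]
        refine Finset.sum_congr rfl fun w _ => ?_
        simp only [grad]
        have := Real.mul_self_sqrt (hA0 v w)
        linear_combination (-(φ j v - φ j w) * (d j v - d j w)) * (-1) * this
      have e4 : |∑ w ∈ Vj j, grad (φ j) (v, w) * grad (d j) (v, w)| ≤ H j * b j v := by
        have e5 : ∑ w ∈ Vj j, grad (φ j) (v, w) * grad (d j) (v, w) =
            ∑ e ∈ (Ej j).filter (fun e => e.1 = v), grad (φ j) e * grad (d j) e := by
          have : (Ej j).filter (fun e => e.1 = v) =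
              ((Vj j).filter fun w => A v w ≠ 0).image (fun w => (v, w)) := by
            ext ⟨s, t⟩
            simp only [Ej, E, Finset.mem_filter, Finset.mem_univ, true_and, Finset.mem_image,
              Prod.mk.injEq]
            constructor
            · rintro ⟨⟨h1, h2, h3⟩, rfl⟩
              exact ⟨t, ⟨h3, h1⟩, rfl, rfl⟩
            · rintro ⟨w, ⟨h1, h2⟩, rfl, rfl⟩
              exact ⟨⟨h2, hv, h1⟩, rfl⟩
          rw [this, Finset.sum_image (by intro s _ t _ h; simpa using h)]
          symm
          apply Finset.sum_subset (Finset.filter_subset _ _)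
          intro w hw hw'
          have : A v w = 0 := by
            by_contra h
            exact hw' (Finset.mem_filter.2 ⟨hw, h⟩)
          simp [grad, this]
        rw [e5]
        refine (Finset.abs_sum_le_sum_abs _ _).trans ?_
        simp_rw [abs_mul]
        refine (gn_holder hp hpq _ _ _).trans ?_
        refine mul_le_mul_of_nonneg_right ?_ (hb0 j v)
        refine le_trans ?_ (hHle j v)
        exact gn_subset hq1 (Finset.filter_subset_filter _ (Finset.filter_subset _ _)) _
      have e6 : |d j v * LS.mulVec (φ j) v| ≤ M j * |d j v| := by
        rw [abs_mul, mul_comm]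
        exact mul_le_mul_of_nonneg_right (le_gn_top _ _ (Finset.mem_univ v)) (abs_nonneg _)
      have e7 : |φ j v * locLap j (d j) v| ≤ |locLap j (d j) v| := by
        rw [abs_mul, abs_of_nonneg (hφnonneg j v)]
        exact mul_le_of_le_one_left (abs_nonneg _) (hφ1 j v)
      rw [e1, e2]
      simp only [ha, hc, if_pos hv]
      refine (abs_add_le _ _).trans ?_
      have := abs_sub (d j v * LS.mulVec (φ j) v)
        (∑ w ∈ Vj j, grad (φ j) (v, w) * grad (d j) (v, w))
      linarith
    · have e2 : ∑ w ∈ Vj j, A v w * (φ j v - φ j w) * d j w = 0 := by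
        apply Finset.sum_eq_zero
        intro w hw
        have := hbd' j w v hw hv
        rw [hAs] at this
        linear_combination (-d j w) * this
      rw [e1, e2, hφ0 j v hv]
      simp only [ha, hc, if_neg hv, zero_mul, add_zero, abs_zero, mul_zero, zero_add]
      exact mul_nonneg (hH0 j) (hb0 j v)
  have hfin : gn p Finset.univ
      (fun v => L.mulVec x v - L.mulVec (fun u => ∑ j, φ j u * xloc j u) v) ≤
      gn p Finset.univ (fun v => ∑ j, (a j v + H j * b j v + M j * c j v)) := by
    refine gn_mono hp _ fun v _ => ?_
    rw [herr]
    refine le_trans ?_ (le_abs_self _)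
    exact (Finset.abs_sum_le_sum_abs _ _).trans (Finset.sum_le_sum fun j _ => hpt j v)
  refine hfin.trans ((gn_sum hp _ _ _).trans (Finset.sum_le_sum fun j _ => ?_))
  refine (gn_add hp _ _ _).trans (add_le_add ((gn_add hp _ _ _).trans (add_le_add ?_ ?_)) ?_)
  · refine (gn_ext hp (Vj j) _).trans ((gn_mono hp _ fun v _ => ?_).trans (h2 j))
    rw [abs_abs]
  · refine (gn_smul hp _ _ (hH0 j)).trans (mul_le_mul_of_nonneg_left ?_ (hH0 j))
    exact (gn_iter hp _ _).trans (h1 j)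
  · refine (gn_smul hp _ _ (hM0 j)).trans (mul_le_mul_of_nonneg_left ?_ (hM0 j))
    refine (gn_ext hp (Vj j) _).trans ((gn_mono hp _ fun v _ => ?_).trans (h0 j))
    rw [abs_abs]
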